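/- Let 𝒯 be an admissible T-mesh and let A^(1) ≠ A^(2) be anchors such that, for some direction j, the local knot vectors satisfy v_k(A^(1)) = v_k(A^(2)) for all directions k ≠ j. Then A^(1) and A^(2) coincide in all components except the j-th, their global knot vectors in direction j coincide (gv_j(A^(1)) = gv_j(A^(2))), and consequently v_j(A^(1)) ≠ v_j(A^(2)) and v_j(A^(1)) ⋈ v_j(A^(2)). -/

import Mathlib

/-!
The argument rests on two facts about the global knots of an entity `E` in direction `k`: every
boundary point of `E k` is a knot, and no interior point is one. Hence the knot following
`inf (E k)` is `sup (E k)` whenever `E k` is an interval, so a local knot vector, in which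
`inf (E k)` has a known rank, determines the component `E k` once the parity of `p k` tells
whether `E k` is a point or an interval. Since `gv j E` does not depend on `E j`, anchors that
agree in all other directions have the same global knot vector in direction `j`, of which both
local ones are blocks; these differ, because otherwise the anchors would agree in direction `j`.

Both facts follow from conformity of the mesh (an entity meeting the closure of another one is
contained in it). Conformity survives bisection because all components are dyadic subintervals of
the initial grid: two of these are disjoint, equal, or one lies in a half of the other, so every
entity in the closure of the bisected cell that crosses the midpoint is among those being cut.
-/

open Set

namespace TSpline

/-- A box in `ℝ^d`, given componentwise. -/
abbrev Box (d : ℕ) := Fin d → Set ℝ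

/-- The subset of `ℝ^d` determined by a box. -/
def toSet {d : ℕ} (E : Box d) : Set (Fin d → ℝ) := Set.pi Set.univ E

/-- The closed index domain `cl Ω = ∏ₖ [0, Nₖ]`. -/
def domain {d : ℕ} (N : Fin d → ℕ) : Set (Fin d → ℝ) :=
  Set.pi Set.univ (fun k => Set.Icc (0 : ℝ) (N k))

/-- The boundary `∂Ω` of the index domain. -/
def bdryDomain {d : ℕ} (N : Fin d → ℕ) : Set (Fin d → ℝ) := frontier (domain N)

/-- A component which is an integer singleton `{n}`, `0 ≤ n ≤ Nₖ`. -/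
def IsSingletonComp (Nk : ℕ) (S : Set ℝ) : Prop :=
  ∃ n : ℕ, n ≤ Nk ∧ S = {(n : ℝ)}

/-- A component which is an open interval with integer endpoints in `[0, Nₖ]`. -/
def IsIntervalComp (Nk : ℕ) (S : Set ℝ) : Prop :=
  ∃ a b : ℕ, a < b ∧ b ≤ Nk ∧ S = Set.Ioo (a : ℝ) (b : ℝ)

/-- A mesh entity: every component is an integer singleton or an open integer interval. -/
def IsMeshEntity {d : ℕ} (N : Fin d → ℕ) (E : Box d) : Prop :=
  ∀ k, IsSingletonComp (N k) (E k) ∨ IsIntervalComp (N k) (E k)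

/-- The directions in which an entity has a singleton component. -/
def singDirs {d : ℕ} (E : Box d) : Set (Fin d) := {i | ∃ r : ℝ, E i = {r}}

/-- Split all entities of `M` contained in the region `D` whose `j`-th component is `Q j`
into the three children obtained by bisecting the `j`-th component at `m`. -/
def midSplit {d : ℕ} (M : Set (Box d)) (Q : Box d) (j : Fin d) (m : ℝ) (D : Box d) :
    Set (Box d) :=
  (M \ {E | E ∈ M ∧ (∀ k, E k ⊆ D k) ∧ E j = Q j}) ∪
  ⋃ E ∈ {E | E ∈ M ∧ (∀ k, E k ⊆ D k) ∧ E j = Q j},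
    ({Function.update E j (Set.Ioo (sInf (Q j)) m),
      Function.update E j {m},
      Function.update E j (Set.Ioo m (sSup (Q j)))} : Set (Box d))

/-- One symmetric bisection of a `d`-dimensional cell with integer midpoint. -/
def BisectStep {d : ℕ} (N : Fin d → ℕ) (M M' : Set (Box d)) : Prop :=
  ∃ Q ∈ M, ∃ j : Fin d, ∃ a b mid : ℕ,
    (∀ k, IsIntervalComp (N k) (Q k)) ∧
    Q j = Set.Ioo (a : ℝ) (b : ℝ) ∧ a + b = 2 * mid ∧
    M' = midSplit M Q j (mid : ℝ) (fun k => closure (Q k))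

/-- A tensor-product mesh with integer breakpoints. -/
def IsTensorMesh {d : ℕ} (N : Fin d → ℕ) (M : Set (Box d)) : Prop :=
  ∃ G : Fin d → Finset ℕ,
    (∀ k, 0 ∈ G k ∧ N k ∈ G k ∧ ∀ n ∈ G k, n ≤ N k) ∧
    M = {E | ∀ k, (∃ n ∈ G k, E k = {(n : ℝ)}) ∨
          (∃ a ∈ G k, ∃ b ∈ G k, a < b ∧ (∀ c ∈ G k, c ≤ a ∨ b ≤ c) ∧
            E k = Set.Ioo (a : ℝ) (b : ℝ))}

/-- A T-mesh of the index domain: a finite disjoint partition of `cl Ω` into mesh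
entities, obtained from a tensor-product mesh by repeated symmetric bisections. -/
structure TMesh (d : ℕ) (N : Fin d → ℕ) where
  entities : Set (Box d)
  finite : entities.Finite
  mem_entity : ∀ E ∈ entities, IsMeshEntity N E
  union_eq : (⋃ E ∈ entities, toSet E) = domain N
  pairwise_disjoint : ∀ E ∈ entities, ∀ F ∈ entities, E ≠ F → toSet E ∩ toSet F = ∅
  constructed : ∃ M₀ : Set (Box d), IsTensorMesh N M₀ ∧
    Relation.ReflTransGen (BisectStep N) M₀ entities

variable {d : ℕ} {N : Fin d → ℕ}

/-- `H^k`: the entities with exactly `d - k` singleton components. -/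
def Hdim (T : TMesh d N) (k : ℕ) : Set (Box d) :=
  {E ∈ T.entities | (singDirs E).ncard = d - k}

/-- The `j`-orthogonal skeleton `Sk_j`. -/
def skel (T : TMesh d N) (j : Fin d) : Set (Fin d → ℝ) :=
  ⋃ F ∈ {F ∈ Hdim T (d - 1) | ∃ r : ℝ, F j = {r}}, closure (toSet F)

/-- The valence of a `(d-2)`-dimensional entity: the number of hyperfaces in whose
boundary it lies. -/
noncomputable def valence (T : TMesh d N) (J : Box d) : ℕ :=
  {F ∈ Hdim T (d - 1) | toSet J ⊆ frontier (toSet F)}.ncard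

/-- A T-junction (hanging interface). -/
def IsTJunction (T : TMesh d N) (J : Box d) : Prop :=
  J ∈ Hdim T (d - 2) ∧ ¬ toSet J ⊆ bdryDomain N ∧ valence T J < 4

/-- `TJData T J Q i j`: `Q` is an associated cell of the T-junction `J`, with orthogonal
direction `i` and pointing direction `j`. -/
def TJData (T : TMesh d N) (J Q : Box d) (i j : Fin d) : Prop :=
  Q ∈ Hdim T d ∧ toSet J ⊆ frontier (toSet Q) ∧
  closure (toSet J) ∩ Set.pi Set.univ (fun k => frontier (Q k)) = ∅ ∧
  i ≠ j ∧ (∃ r : ℝ, J i = {r}) ∧ (∃ r : ℝ, J j = {r}) ∧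
  J i ⊆ Q i ∧ J i ≠ Q i ∧ J j ⊆ frontier (Q j)

/-- `⌊(p_k + 1)/2⌋`. -/
def halfdeg (p : Fin d → ℕ) (k : Fin d) : ℕ := (p k + 1) / 2

/-- The active region `AR_p`. -/
def activeRegion (N p : Fin d → ℕ) : Set (Fin d → ℝ) :=
  Set.pi Set.univ (fun k => Set.Icc (halfdeg p k : ℝ) ((N k : ℝ) - (halfdeg p k : ℝ)))

/-- The slice `S_k(n)`. -/
def slice (N : Fin d → ℕ) (k : Fin d) (n : ℕ) : Set (Fin d → ℝ) :=
  {x ∈ domain N | x k = (n : ℝ)}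

/-- The `k`-th frame region `FR^(k)`. -/
def frameRegion (N p : Fin d → ℕ) (k : Fin d) : Set (Fin d → ℝ) :=
  {x ∈ domain N | x k ∈ Set.Icc (0 : ℝ) (halfdeg p k : ℝ) ∪
      Set.Icc ((N k : ℝ) - (halfdeg p k : ℝ)) (N k : ℝ)}

/-- Admissibility of a T-mesh. -/
def Admissible (p : Fin d → ℕ) (T : TMesh d N) : Prop :=
  (∀ k : Fin d, ∀ J Q : Box d, ∀ i j : Fin d, IsTJunction T J → TJData T J Q i j →
      (i = k ∨ j = k) → ¬ toSet J ⊆ frameRegion N p k) ∧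
  (∀ k : Fin d, ∀ n : ℕ, (n ≤ halfdeg p k ∨ (N k - halfdeg p k ≤ n ∧ n ≤ N k)) →
      slice N k n ⊆ skel T k)

/-- Anchors of degree `p`. -/
def IsAnchor (p : Fin d → ℕ) (T : TMesh d N) (A : Box d) : Prop :=
  A ∈ T.entities ∧ toSet A ⊆ activeRegion N p ∧
  ∀ j : Fin d, (∃ r : ℝ, A j = {r}) ↔ Odd (p j)

/-- `P_{j,n}(E)`: replace the `j`-th component of `E` by `{n}`. -/
def proj {d : ℕ} (E : Box d) (j : Fin d) (n : ℕ) : Box d :=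
  Function.update E j {(n : ℝ)}

/-- The global knot vector `gv_j(E)` (as a set of integer indices). -/
def gv (T : TMesh d N) (j : Fin d) (E : Box d) : Set ℕ :=
  {n | n ≤ N j ∧ toSet (proj E j n) ⊆ skel T j}

/-- `V` is a block of consecutive entries of `G`. -/
def IsBlockOf (V G : Set ℕ) : Prop :=
  V ⊆ G ∧ V.Finite ∧ ∀ g ∈ G, ∀ a ∈ V, ∀ b ∈ V, a ≤ g → g ≤ b → g ∈ V

/-- Two knot vectors overlap (`⋈`): both occur as blocks of consecutive entries of a
common knot vector. -/
def Overlaps (V₁ V₂ : Set ℕ) : Prop :=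
  ∃ W : Set ℕ, W.Finite ∧ IsBlockOf V₁ W ∧ IsBlockOf V₂ W

/-- The convex hull in `ℝ` of a set of integer indices. -/
def convOf (V : Set ℕ) : Set ℝ := convexHull ℝ ((fun n : ℕ => (n : ℝ)) '' V)

/-- The local knot vector of an anchor `A` in direction `j`: the block of `p_j + 2`
consecutive entries of `gv_j(A)` whose entry of rank `⌊(p_j+1)/2⌋` is `inf A_j`. -/
def IsAnchorKV (T : TMesh d N) (p : Fin d → ℕ) (A : Box d) (j : Fin d) (V : Set ℕ) : Prop :=
  IsBlockOf V (gv T j A) ∧ V.ncard = p j + 2 ∧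
  ∃ a : ℕ, (a : ℝ) = sInf (A j) ∧ a ∈ V ∧ {v ∈ V | v < a}.ncard = halfdeg p j

open Classical in
noncomputable def anchorKV (T : TMesh d N) (p : Fin d → ℕ) (A : Box d) (j : Fin d) :
    Set ℕ :=
  if h : ∃ V, IsAnchorKV T p A j V then h.choose else ∅

/-- The index support of an anchor. -/
noncomputable def suppA (T : TMesh d N) (p : Fin d → ℕ) (A : Box d) : Set (Fin d → ℝ) :=
  Set.pi Set.univ (fun k => convOf (anchorKV T p A k))

/-- The local knot vector of a T-junction `J` (with associated cell `Q`, orthogonal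
direction `i`, pointing direction `j`) in direction `k`. -/
def IsTJKV (T : TMesh d N) (p : Fin d → ℕ) (J Q : Box d) (i j k : Fin d) (V : Set ℕ) :
    Prop :=
  if k = i then ∃ t : ℕ, J i = {(t : ℝ)} ∧ V = {t}
  else if k = j then
    IsBlockOf V (gv T j J) ∧ V.ncard = p j + 1 ∧
    ((Even (p j) ∧ ∃ t : ℕ, J j = {(t : ℝ)} ∧ t ∈ V ∧ {v ∈ V | v < t}.ncard = p j / 2) ∨
     (Odd (p j) ∧ ∃ a b : ℕ, (a : ℝ) = sInf (Q j) ∧ (b : ℝ) = sSup (Q j) ∧ a ∈ V ∧ b ∈ V ∧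
        {v ∈ V | v < a}.ncard = p j / 2 ∧ {v ∈ V | v < b}.ncard = p j / 2 + 1))
  else
    IsBlockOf V (gv T k J) ∧ V.ncard = p k + 2 + p k % 2 ∧
    ∃ a b : ℕ, a ∈ V ∧ b ∈ V ∧ J k = Set.Ioo (a : ℝ) (b : ℝ) ∧
      {v ∈ V | v < a}.ncard = (p k + 1) / 2 ∧ {v ∈ V | v < b}.ncard = (p k + 1) / 2 + 1

/-- Local knot vector of a T-junction, quantifying over the (unique) associated data. -/
def IsTJKVFull (T : TMesh d N) (p : Fin d → ℕ) (J : Box d) (k : Fin d) (V : Set ℕ) :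
    Prop :=
  ∃ Q : Box d, ∃ i j : Fin d, TJData T J Q i j ∧ IsTJKV T p J Q i j k V

open Classical in
noncomputable def tjKV (T : TMesh d N) (p : Fin d → ℕ) (J : Box d) (k : Fin d) : Set ℕ :=
  if h : ∃ V, IsTJKVFull T p J k V then h.choose else ∅

/-- The geometric T-junction extension `GTJ(J)`. -/
noncomputable def GTJ (T : TMesh d N) (p : Fin d → ℕ) (J : Box d) : Set (Fin d → ℝ) :=
  Set.pi Set.univ (fun k => convOf (tjKV T p J k))

/-- `J` is a T-junction with orthogonal direction `i` and pointing direction `j`. -/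
def HasDirs (T : TMesh d N) (J : Box d) (i j : Fin d) : Prop :=
  IsTJunction T J ∧ ∃ Q : Box d, TJData T J Q i j

/-- Strong geometric analysis-suitability. -/
def SGAS (T : TMesh d N) (p : Fin d → ℕ) : Prop :=
  ∀ J₁ J₂ : Box d, ∀ i₁ j₁ i₂ j₂ : Fin d,
    HasDirs T J₁ i₁ j₁ → HasDirs T J₂ i₂ j₂ → i₁ ≠ i₂ →
    GTJ T p J₁ ∩ GTJ T p J₂ = ∅

/-- Weak geometric analysis-suitability. -/
def WGAS (T : TMesh d N) (p : Fin d → ℕ) : Prop :=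
  ∀ J₁ J₂ : Box d, ∀ i₁ j₁ i₂ j₂ : Fin d,
    HasDirs T J₁ i₁ j₁ → HasDirs T J₂ i₂ j₂ → i₁ ≠ i₂ → j₁ ≠ j₂ →
    GTJ T p J₁ ∩ GTJ T p J₂ = ∅

/-- The abstract T-junction extension `ATJ_j(n)`. -/
noncomputable def ATJ (T : TMesh d N) (p : Fin d → ℕ) (j : Fin d) (n : ℕ) :
    Set (Fin d → ℝ) :=
  slice N j n ∩
  (⋃ A ∈ {A : Box d | IsAnchor p T A ∧ n ∈ gv T j A}, suppA T p A) ∩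
  (⋃ A ∈ {A : Box d | IsAnchor p T A ∧ n ∉ gv T j A}, suppA T p A)

/-- `ATJ_j = ⋃ₙ ATJ_j(n)`. -/
noncomputable def ATJfull (T : TMesh d N) (p : Fin d → ℕ) (j : Fin d) :
    Set (Fin d → ℝ) :=
  ⋃ n ∈ Set.Iic (N j), ATJ T p j n

/-- Abstract analysis-suitability. -/
def AAS (T : TMesh d N) (p : Fin d → ℕ) : Prop :=
  ∀ i j : Fin d, i ≠ j → ∀ n m : ℕ, n ≤ N i → m ≤ N j →
    ATJ T p i n ∩ ATJ T p j m = ∅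

/-- Two anchors weakly partially overlap. -/
def WeakPartOverlap (T : TMesh d N) (p : Fin d → ℕ) (A₁ A₂ : Box d) : Prop :=
  ∃ ℓ : Fin d, anchorKV T p A₁ ℓ ≠ anchorKV T p A₂ ℓ ∧
    Overlaps (anchorKV T p A₁ ℓ) (anchorKV T p A₂ ℓ)

/-- Two anchors strongly partially overlap. -/
def StrongPartOverlap (T : TMesh d N) (p : Fin d → ℕ) (A₁ A₂ : Box d) : Prop :=
  suppA T p A₁ ∩ suppA T p A₂ = ∅ ∨
  d - 1 ≤ {k : Fin d | Overlaps (anchorKV T p A₁ k) (anchorKV T p A₂ k)}.ncard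

/-- Weak dual-compatibility. -/
def WDC (T : TMesh d N) (p : Fin d → ℕ) : Prop :=
  ∀ A₁ A₂ : Box d, IsAnchor p T A₁ → IsAnchor p T A₂ → A₁ ≠ A₂ →
    WeakPartOverlap T p A₁ A₂

/-- Strong dual-compatibility. -/
def SDC (T : TMesh d N) (p : Fin d → ℕ) : Prop :=
  ∀ A₁ A₂ : Box d, IsAnchor p T A₁ → IsAnchor p T A₂ → A₁ ≠ A₂ →
    StrongPartOverlap T p A₁ A₂

/-- `Q'` is a neighboring cell of `Q` in direction `ℓ`. -/
def NeighborInDir (T : TMesh d N) (Q Q' : Box d) (ℓ : Fin d) : Prop :=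
  Q' ∈ Hdim T d ∧ Q' ≠ Q ∧
  (sSup (Q ℓ) = sInf (Q' ℓ) ∨ sSup (Q' ℓ) = sInf (Q ℓ)) ∧
  ∀ k : Fin d, k ≠ ℓ → (Q k ∩ Q' k).Nonempty

/-- Assumption A: every cell has neighbor cells in the active region in at least three
pairwise distinct directions. -/
def AssumptionA (T : TMesh d N) (p : Fin d → ℕ) : Prop :=
  ∀ Q ∈ Hdim T d, ∃ l₁ l₂ l₃ : Fin d, l₁ ≠ l₂ ∧ l₁ ≠ l₃ ∧ l₂ ≠ l₃ ∧
    ∀ l ∈ ({l₁, l₂, l₃} : Set (Fin d)),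
      ∃ Q' : Box d, NeighborInDir T Q Q' l ∧ toSet Q' ⊆ activeRegion N p

/-- The extended region `D` of Algorithm `subdiv`. -/
def extendD (N p : Fin d → ℕ) (Q : Box d) (j : Fin d) : Box d := fun ℓ =>
  closure (Q ℓ) ∪
  {x : ℝ | ℓ ≠ j ∧ sInf (Q ℓ) = (halfdeg p ℓ : ℝ) ∧
      x ∈ Set.Icc (0 : ℝ) (halfdeg p ℓ : ℝ)} ∪
  {x : ℝ | ℓ ≠ j ∧ sSup (Q ℓ) = (N ℓ : ℝ) - (halfdeg p ℓ : ℝ) ∧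
      x ∈ Set.Icc ((N ℓ : ℝ) - (halfdeg p ℓ : ℝ)) (N ℓ : ℝ)}

/-- The entity set produced by Algorithm `subdiv(𝒯, Q, j)`. -/
def subdivEntities (N p : Fin d → ℕ) (M : Set (Box d)) (Q : Box d) (j : Fin d) :
    Set (Box d) :=
  midSplit M Q j ((sInf (Q j) + sSup (Q j)) / 2) (extendD N p Q j)

open Classical in
/-- The componentwise minimal bounding box `M(E,F)`. -/
noncomputable def MBox {d : ℕ} (E F : Box d) : Box d := fun ℓ =>
  if (E ℓ ∩ F ℓ).Nonempty then E ℓ ∩ F ℓ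
  else if sSup (E ℓ) ≤ sInf (F ℓ) then Set.Icc (sSup (E ℓ)) (sInf (F ℓ))
  else Set.Icc (sSup (F ℓ)) (sInf (E ℓ))

/-- `V` is the local knot vector of `E` (an anchor or a T-junction) in direction `j`. -/
def IsLocalKVOf (T : TMesh d N) (p : Fin d → ℕ) (E : Box d) (j : Fin d) (V : Set ℕ) :
    Prop :=
  (IsAnchor p T E ∧ IsAnchorKV T p E j V) ∨
  (IsTJunction T E ∧ IsTJKVFull T p E j V)

end TSpline

namespace TSpline

/-! ### Dyadic subintervals of a one-dimensional grid -/

section Dyadic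

variable {G : Finset ℕ} {a b a' b' c e m n : ℕ}

/-- `a` and `b` are consecutive points of the grid `G`, so that `(a, b)` is a grid interval. -/
def IsConsecutive (G : Finset ℕ) (a b : ℕ) : Prop :=
  a ∈ G ∧ b ∈ G ∧ a < b ∧ ∀ c ∈ G, c ≤ a ∨ b ≤ c

theorem IsConsecutive.eq_of_lt (h : IsConsecutive G a b) (h' : IsConsecutive G a' b')
    (hab' : a < b') (hab : a' < b) : a = a' ∧ b = b' := by
  obtain ⟨ha, hb, -, hG⟩ := h
  obtain ⟨ha', hb', -, hG'⟩ := h'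
  have := hG a' ha'
  have := hG b' hb'
  have := hG' a ha
  have := hG' b hb
  omega

theorem exists_isConsecutive (hG : G.Nontrivial) (hn : n ∈ G) :
    ∃ a b, IsConsecutive G a b ∧ n ∈ Icc a b := by
  obtain ⟨r, hr, hrn⟩ := hG.exists_ne n
  rcases lt_or_gt_of_ne hrn with hlt | hgt
  · obtain ⟨a, ha, hmax⟩ := (G.filter (· < n)).exists_max_image id ⟨r, by simp [hr, hlt]⟩
    simp only [Finset.mem_filter, id, and_imp] at ha hmax
    refine ⟨a, n, ⟨ha.1, hn, ha.2, fun c hc => ?_⟩, ha.2.le, le_rfl⟩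
    exact (lt_or_ge c n).imp_left (hmax c hc)
  · obtain ⟨b, hb, hmin⟩ := (G.filter (n < ·)).exists_min_image id ⟨r, by simp [hr, hgt]⟩
    simp only [Finset.mem_filter, id, and_imp] at hb hmin
    refine ⟨n, b, ⟨hn, hb.1, hb.2, fun c hc => ?_⟩, le_rfl, hb.2.le⟩
    exact (le_or_gt c n).imp_right (hmin c hc)

/-- `(a, b)` is obtained from a grid interval of `G` by repeatedly passing to one of the two
halves; these are the intervals that bisection of a tensor-product mesh can produce. -/
inductive IsDyadic (G : Finset ℕ) : ℕ → ℕ → Prop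
  | grid {a b : ℕ} (h : IsConsecutive G a b) : IsDyadic G a b
  | left {a b m : ℕ} (h : IsDyadic G a b) (hm : a + b = 2 * m) : IsDyadic G a m
  | right {a b m : ℕ} (h : IsDyadic G a b) (hm : a + b = 2 * m) : IsDyadic G m b

/-- `(a, b)` is contained in one of the two halves of `(a', b')`. -/
def InHalf (a b a' b' : ℕ) : Prop :=
  a' ≤ a ∧ 2 * b ≤ a' + b' ∨ a' + b' ≤ 2 * a ∧ b ≤ b'

theorem IsDyadic.lt (h : IsDyadic G a b) : a < b := by
  induction h with
  | grid h => exact h.2.2.1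
  | left _ _ ih => omega
  | right _ _ ih => omega

theorem IsConsecutive.comparable (h : IsConsecutive G a b) (h' : IsDyadic G a' b') :
    b ≤ a' ∨ b' ≤ a ∨ a = a' ∧ b = b' ∨ InHalf a' b' a b := by
  induction h' with
  | @grid a' b' h' =>
    by_cases hlt : a < b' ∧ a' < b
    · exact .inr (.inr (.inl (h.eq_of_lt h' hlt.1 hlt.2)))
    · omega
  | left h' hm ih =>
    have := h'.lt
    unfold InHalf at *
    omega
  | right h' hm ih =>
    have := h'.lt
    unfold InHalf at *
    omega

theorem IsDyadic.comparable (h : IsDyadic G a b) (h' : IsDyadic G a' b') :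
    b ≤ a' ∨ b' ≤ a ∨ a = a' ∧ b = b' ∨ InHalf a b a' b' ∨ InHalf a' b' a b := by
  induction h generalizing a' b' with
  | grid h => have := h.comparable h'; tauto
  | left h hm ih | right h hm ih =>
    have hlt := h.lt
    induction h' with
    | grid h' =>
      have := h'.comparable (h.left hm)
      have := h'.comparable (h.right hm)
      unfold InHalf at *
      omega
    | left h' hm' ih' | right h' hm' ih' =>
      have := h'.lt
      have := ih (h'.left hm')
      have := ih (h'.right hm')
      unfold InHalf at *
      omega

theorem IsDyadic.eq_of_midpoint_mem (h : IsDyadic G a b) (hm : a + b = 2 * m)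
    (h' : IsDyadic G c e) (hac : a ≤ c) (heb : e ≤ b) (hcm : c < m) (hme : m < e) :
    c = a ∧ e = b := by
  have := h.comparable h'
  unfold InHalf at this
  omega

end Dyadic

/-! ### Components of mesh entities -/

section Components

variable {G : Finset ℕ} {S S' : Set ℝ} {a b : ℕ}

/-- A component of an entity of the tensor-product mesh with breakpoints `G`: a grid point or a
grid interval. -/
def IsGridComp (G : Finset ℕ) (S : Set ℝ) : Prop :=
  (∃ n ∈ G, S = {(n : ℝ)}) ∨ ∃ a b : ℕ, IsConsecutive G a b ∧ S = Ioo (a : ℝ) b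

/-- A component of an entity of a mesh obtained by bisections from breakpoints `G`: a point or
a dyadic interval. -/
def IsDyadicComp (G : Finset ℕ) (S : Set ℝ) : Prop :=
  (∃ r : ℝ, S = {r}) ∨ ∃ a b : ℕ, IsDyadic G a b ∧ S = Ioo (a : ℝ) b

theorem isGridComp_iff : IsGridComp G S ↔ (∃ n ∈ G, S = {(n : ℝ)}) ∨
    ∃ a ∈ G, ∃ b ∈ G, a < b ∧ (∀ c ∈ G, c ≤ a ∨ b ≤ c) ∧ S = Ioo (a : ℝ) b := by
  simp only [IsGridComp, IsConsecutive, and_assoc, exists_and_left]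

theorem IsGridComp.isDyadicComp (h : IsGridComp G S) : IsDyadicComp G S := by
  rcases h with ⟨n, -, rfl⟩ | ⟨a, b, hab, rfl⟩
  exacts [.inl ⟨n, rfl⟩, .inr ⟨a, b, .grid hab, rfl⟩]

theorem IsGridComp.exists_isConsecutive (hG : G.Nontrivial) (hS : IsGridComp G S) :
    ∃ a b : ℕ, IsConsecutive G a b ∧ S ⊆ Icc (a : ℝ) b := by
  rcases hS with ⟨n, hn, rfl⟩ | ⟨a, b, hab, rfl⟩
  · obtain ⟨a, b, hab, hna, hnb⟩ := exists_isConsecutive hG hn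
    exact ⟨a, b, hab, by simp [hna, hnb]⟩
  · exact ⟨a, b, hab, Ioo_subset_Icc_self⟩

theorem IsDyadicComp.ordConnected (h : IsDyadicComp G S) : S.OrdConnected := by
  rcases h with ⟨r, rfl⟩ | ⟨a, b, -, rfl⟩
  exacts [ordConnected_singleton, ordConnected_Ioo]

theorem nontrivial_Ioo_natCast (hab : a < b) : (Ioo (a : ℝ) b).Nontrivial :=
  (Ioo_infinite (Nat.cast_lt.2 hab)).nontrivial

theorem IsIntervalComp.nontrivial {n : ℕ} {S : Set ℝ} (h : IsIntervalComp n S) :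
    S.Nontrivial := by
  obtain ⟨a, b, hab, -, rfl⟩ := h
  exact nontrivial_Ioo_natCast hab

theorem closure_Ioo_natCast (hab : a < b) : closure (Ioo (a : ℝ) b) = Icc (a : ℝ) b :=
  closure_Ioo (Nat.cast_lt.2 hab).ne

theorem IsDyadicComp.isDyadic (hab : a < b) (h : IsDyadicComp G (Ioo (a : ℝ) b)) :
    IsDyadic G a b := by
  rcases h with ⟨r, hr⟩ | ⟨a', b', hab', heq⟩
  · exact absurd hr (nontrivial_Ioo_natCast hab).ne_singleton
  · have hinf := congrArg sInf heq
    have hsup := congrArg sSup heq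
    rw [csInf_Ioo (Nat.cast_lt.2 hab), csInf_Ioo (Nat.cast_lt.2 hab'.lt), Nat.cast_inj] at hinf
    rw [csSup_Ioo (Nat.cast_lt.2 hab), csSup_Ioo (Nat.cast_lt.2 hab'.lt), Nat.cast_inj] at hsup
    rwa [hinf, hsup]

theorem IsDyadicComp.interior_closure (h : IsDyadicComp G S) :
    interior (closure S) = interior S := by
  rcases h with ⟨r, rfl⟩ | ⟨a, b, hab, rfl⟩
  · rw [closure_singleton]
  · rw [closure_Ioo_natCast hab.lt, interior_Icc, interior_Ioo]

theorem IsConsecutive.notMem_Ioo_natCast {c : ℕ} (h : IsConsecutive G a b) (hc : c ∈ G) :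
    (c : ℝ) ∉ Ioo (a : ℝ) b := by
  rintro ⟨hac, hcb⟩
  have := h.2.2.2 c hc
  have := Nat.cast_lt.1 hac
  have := Nat.cast_lt.1 hcb
  omega

theorem IsGridComp.subset_closure (hS : IsGridComp G S) (hS' : IsGridComp G S')
    (h : (S ∩ closure S').Nonempty) : S ⊆ closure S' := by
  obtain ⟨x, hx, hx'⟩ := h
  rcases hS with ⟨n, -, rfl⟩ | ⟨a, b, hab, rfl⟩
  · rwa [singleton_subset_iff, ← mem_singleton_iff.1 hx]
  rcases hS' with ⟨n, hn, rfl⟩ | ⟨a', b', hab', rfl⟩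
  · rw [closure_singleton, mem_singleton_iff] at hx'
    exact absurd (hx' ▸ hx) (hab.notMem_Ioo_natCast hn)
  · rw [closure_Ioo_natCast hab'.2.2.1] at hx'
    have hab₁ : a < b' := Nat.cast_lt.1 (hx.1.trans_le hx'.2)
    have hab₂ : a' < b := Nat.cast_lt.1 (hx'.1.trans_lt hx.2)
    obtain ⟨rfl, rfl⟩ := hab.eq_of_lt hab' hab₁ hab₂
    exact subset_closure

end Components

/-! ### Boxes, skeletons and dyadic meshes -/

section Boxes

variable {d : ℕ} {E F : Box d} {j k : Fin d} {S : Set ℝ} {x : Fin d → ℝ} {M : Set (Box d)}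

theorem mem_toSet : x ∈ toSet E ↔ ∀ i, x i ∈ E i := mem_univ_pi

theorem toSet_mono (h : ∀ i, E i ⊆ F i) : toSet E ⊆ toSet F := pi_mono fun i _ => h i

theorem mem_toSet_update :
    x ∈ toSet (Function.update E k S) ↔ x k ∈ S ∧ ∀ i, i ≠ k → x i ∈ E i :=
  mem_toSet.trans (Function.forall_update_iff E fun i Y => x i ∈ Y)

theorem notMem_singDirs_of_nontrivial (h : (E k).Nontrivial) : k ∉ singDirs E :=
  fun ⟨_, hr⟩ => h.ne_singleton hr

theorem singDirs_eq_empty (h : ∀ i, (E i).Nontrivial) : singDirs E = ∅ :=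
  eq_empty_of_forall_notMem fun i => notMem_singDirs_of_nontrivial (h i)

theorem singDirs_update_singleton (E : Box d) (j : Fin d) (r : ℝ) :
    singDirs (Function.update E j {r}) = insert j (singDirs E) := by
  ext i
  rcases eq_or_ne i j with rfl | hij <;> simp [singDirs, *]

theorem singDirs_update_of_nontrivial (hE : (E j).Nontrivial) (hS : S.Nontrivial) :
    singDirs (Function.update E j S) = singDirs E := by
  ext i
  rcases eq_or_ne i j with rfl | hij
  · simp [singDirs, hE.ne_singleton, hS.ne_singleton]
  · simp [singDirs, hij]

/-- The `k`-orthogonal skeleton of an arbitrary set of entities; for the entities of a T-mesh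
this is `skel`. A hyperface is encoded by its only singleton direction being `k`. -/
def skelOf (M : Set (Box d)) (k : Fin d) : Set (Fin d → ℝ) :=
  {x | ∃ F ∈ M, singDirs F = {k} ∧ ∀ i, x i ∈ closure (F i)}

theorem skel_eq_skelOf {N : Fin d → ℕ} (T : TMesh d N) (k : Fin d) :
    skel T k = skelOf T.entities k := by
  have hd : d - (d - 1) = 1 := by have := k.pos; omega
  ext x
  simp only [skel, Hdim, skelOf, hd, mem_iUnion, exists_prop, toSet, closure_pi_set, mem_pi,
    mem_univ, true_imp_iff, mem_ofPred_eq, ncard_eq_one]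
  refine exists_congr fun F => ⟨?_, ?_⟩
  · rintro ⟨⟨⟨hF, i, hi⟩, hk⟩, hx⟩
    obtain rfl : k = i := by rw [← mem_singleton_iff, ← hi]; exact hk
    exact ⟨hF, hi, hx⟩
  · rintro ⟨hF, hk, hx⟩
    exact ⟨⟨⟨hF, k, hk⟩, hk.ge rfl⟩, hx⟩

/-- Conformity: the closure of an entity contains every entity that it meets. -/
def IsConforming (M : Set (Box d)) : Prop :=
  ∀ E ∈ M, ∀ F ∈ M, (∀ k, (E k ∩ closure (F k)).Nonempty) → ∀ k, E k ⊆ closure (F k)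

/-- A mesh with the properties of the tensor-product mesh on the grids `G k` that survive
bisection: dyadic components, conformity, and singleton components only inside the skeleton. -/
structure IsDyadicMesh (G : Fin d → Finset ℕ) (M : Set (Box d)) : Prop where
  dyadicComp : ∀ E ∈ M, ∀ k, IsDyadicComp (G k) (E k)
  conforming : IsConforming M
  toSet_subset_skelOf : ∀ E ∈ M, ∀ k ∈ singDirs E, toSet E ⊆ skelOf M k

end Boxes

/-! ### Tensor-product meshes -/

section Tensor

variable {d : ℕ} {N : Fin d → ℕ} {G : Fin d → Finset ℕ} {E : Box d} {k : Fin d}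
  {M : Set (Box d)}

theorem toSet_subset_skelOf_of_isGridComp (hG : ∀ k, (G k).Nontrivial)
    (hE : ∀ i, IsGridComp (G i) (E i)) (hk : k ∈ singDirs E) :
    toSet E ⊆ skelOf {E | ∀ i, IsGridComp (G i) (E i)} k := by
  choose a b hab hEab using fun i => (hE i).exists_isConsecutive (hG i)
  obtain ⟨r, hr⟩ := hk
  refine fun x hx => ⟨Function.update (fun i => Ioo (a i : ℝ) (b i)) k {r}, ?_, ?_, ?_⟩
  · rw [← hr]
    exact (Function.forall_update_iff _ fun i Y => IsGridComp (G i) Y).2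
      ⟨hE k, fun i _ => .inr ⟨a i, b i, hab i, rfl⟩⟩
  · rw [singDirs_update_singleton, singDirs_eq_empty fun i =>
      nontrivial_Ioo_natCast (hab i).2.2.1, insert_empty_eq]
  · refine (Function.forall_update_iff _ fun i Y => x i ∈ closure Y).2
      ⟨subset_closure (hr ▸ mem_toSet.1 hx k), fun i _ => ?_⟩
    rw [closure_Ioo_natCast (hab i).2.2.1]
    exact hEab i (mem_toSet.1 hx i)

theorem IsTensorMesh.exists_isDyadicMesh (hN : ∀ k, 0 < N k) (hM : IsTensorMesh N M) :
    ∃ G, IsDyadicMesh G M := by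
  obtain ⟨G, hG, rfl⟩ := hM
  have hnontrivial (k) : (G k).Nontrivial := ⟨0, (hG k).1, N k, (hG k).2.1, (hN k).ne⟩
  simp only [← isGridComp_iff]
  exact ⟨G, fun E hE k => (hE k).isDyadicComp,
    fun E hE F hF h k => (hE k).subset_closure (hF k) (h k),
    fun E hE k => toSet_subset_skelOf_of_isGridComp hnontrivial hE⟩

end Tensor

/-! ### Bisection -/

section Bisection

/-- The three components into which `(a, b)` is cut at `m`. -/
def bisectionPieces (a m b : ℕ) : Set (Set ℝ) := {Ioo (a : ℝ) m, {(m : ℝ)}, Ioo (m : ℝ) b}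

theorem subset_Ioo_of_mem_bisectionPieces {a m b : ℕ} {S : Set ℝ} (ham : a < m) (hmb : m < b)
    (hS : S ∈ bisectionPieces a m b) : S ⊆ Ioo (a : ℝ) b := by
  have ham' : (a : ℝ) < m := Nat.cast_lt.2 ham
  have hmb' : (m : ℝ) < b := Nat.cast_lt.2 hmb
  rcases hS with rfl | rfl | rfl
  exacts [Ioo_subset_Ioo_right hmb'.le, singleton_subset_iff.2 ⟨ham', hmb'⟩,
    Ioo_subset_Ioo_left ham'.le]

theorem subset_closure_of_mem_bisectionPieces {a m b : ℕ} {S S' : Set ℝ} (ham : a < m)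
    (hmb : m < b) (hS' : S' ∈ bisectionPieces a m b) (hS : S.OrdConnected)
    (hSab : S ⊆ Icc (a : ℝ) b) (hSm : S.Subsingleton ∨ (m : ℝ) ∉ S)
    (hne : (S ∩ closure S').Nonempty) : S ⊆ closure S' := by
  obtain ⟨x, hx, hx'⟩ := hne
  rcases hSm with hsub | hm
  · exact fun y hy => hsub hx hy ▸ hx'
  rcases hS' with rfl | rfl | rfl
  · rw [closure_Ioo_natCast ham] at hx' ⊢
    exact fun y hy => ⟨(hSab hy).1, le_of_not_gt fun h => hm (hS.out hx hy ⟨hx'.2, h.le⟩)⟩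
  · rw [closure_singleton, mem_singleton_iff] at hx'
    exact absurd (hx' ▸ hx) hm
  · rw [closure_Ioo_natCast hmb] at hx' ⊢
    exact fun y hy => ⟨le_of_not_gt fun h => hm (hS.out hy hx ⟨h.le, hx'.1⟩), (hSab hy).2⟩

variable {d : ℕ} {N : Fin d → ℕ} {G : Fin d → Finset ℕ} {M M' : Set (Box d)} {Q E : Box d}
  {j k : Fin d} {a m b : ℕ}

/-- `E` is one of the entities of `M` that are cut when the cell `Q` is bisected in direction
`j`. -/
def IsSplit (M : Set (Box d)) (Q : Box d) (j : Fin d) (E : Box d) : Prop :=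
  E ∈ M ∧ (∀ k, E k ⊆ closure (Q k)) ∧ E j = Q j

/-- `M'` arises from `M` by bisecting the cell `Q`, with `j`-th component `(a, b)`, at `m`. -/
structure IsBisection (M M' : Set (Box d)) (Q : Box d) (j : Fin d) (a m b : ℕ) : Prop where
  mem : Q ∈ M
  nontrivial : ∀ k, (Q k).Nontrivial
  comp_eq : Q j = Ioo (a : ℝ) b
  left_lt : a < m
  lt_right : m < b
  midpoint : a + b = 2 * m
  mem_iff : ∀ E, E ∈ M' ↔ (E ∈ M ∧ ¬ IsSplit M Q j E) ∨
    ∃ F, IsSplit M Q j F ∧ ∃ S ∈ bisectionPieces a m b, E = Function.update F j S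

theorem BisectStep.exists_isBisection (h : BisectStep N M M') :
    ∃ Q j a m b, IsBisection M M' Q j a m b := by
  obtain ⟨Q, hQ, j, a, b, m, hcell, hQj, hm, rfl⟩ := h
  have hab : a < b := by
    have := (hcell j).nontrivial.nonempty
    rw [hQj, nonempty_Ioo] at this
    exact Nat.cast_lt.1 this
  refine ⟨Q, j, a, m, b, hQ, fun k => (hcell k).nontrivial, hQj, by omega, by omega, hm,
    fun E => ?_⟩
  have hab' : (a : ℝ) < b := Nat.cast_lt.2 hab
  simp only [midSplit, hQj, csInf_Ioo hab', csSup_Ioo hab', mem_union, mem_sdiff, mem_iUnion,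
    mem_ofPred_eq, IsSplit, bisectionPieces, mem_insert_iff, mem_singleton_iff, exists_prop,
    exists_eq_or_imp, exists_eq_left, not_and]

namespace IsBisection

theorem isSplit_self (h : IsBisection M M' Q j a m b) : IsSplit M Q j Q :=
  ⟨h.mem, fun _ => subset_closure, rfl⟩

theorem update_mem (h : IsBisection M M' Q j a m b) (hE : IsSplit M Q j E) {S : Set ℝ}
    (hS : S ∈ bisectionPieces a m b) : Function.update E j S ∈ M' :=
  (h.mem_iff _).2 (.inr ⟨E, hE, S, hS, rfl⟩)

theorem exists_parent (h : IsBisection M M' Q j a m b) (hE : E ∈ M') :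
    ∃ F ∈ M, ∃ S ⊆ F j, E = Function.update F j S ∧
      (S = F j ∧ ¬ IsSplit M Q j F ∨ S ∈ bisectionPieces a m b ∧ IsSplit M Q j F) := by
  rcases (h.mem_iff E).1 hE with ⟨hEM, hns⟩ | ⟨F, hF, S, hS, rfl⟩
  · exact ⟨E, hEM, E j, subset_rfl, by simp, .inl ⟨rfl, hns⟩⟩
  · refine ⟨F, hF.1, S, ?_, rfl, .inr ⟨hS, hF⟩⟩
    rw [hF.2.2, h.comp_eq]
    exact subset_Ioo_of_mem_bisectionPieces h.left_lt h.lt_right hS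

theorem isDyadicComp (h : IsBisection M M' Q j a m b) (hM : IsDyadicMesh G M) (hE : E ∈ M')
    (k : Fin d) : IsDyadicComp (G k) (E k) := by
  obtain ⟨F, hF, S, -, rfl, hS⟩ := h.exists_parent hE
  refine (Function.forall_update_iff F fun i Y => IsDyadicComp (G i) Y).2
    ⟨?_, fun i _ => hM.dyadicComp F hF i⟩ k
  rcases hS with ⟨rfl, -⟩ | ⟨hS, -⟩
  · exact hM.dyadicComp F hF j
  have hab : IsDyadic (G j) a b :=
    (h.comp_eq ▸ hM.dyadicComp Q h.mem j).isDyadic (h.left_lt.trans h.lt_right)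
  rcases hS with rfl | rfl | rfl
  exacts [.inr ⟨a, m, hab.left h.midpoint, rfl⟩, .inl ⟨m, rfl⟩,
    .inr ⟨m, b, hab.right h.midpoint, rfl⟩]

theorem skelOf_subset (h : IsBisection M M' Q j a m b) (k : Fin d) :
    skelOf M k ⊆ skelOf M' k := by
  rintro x ⟨F, hF, hFk, hx⟩
  by_cases hs : IsSplit M Q j F
  · obtain ⟨S, hS, hSn, hxS⟩ : ∃ S ∈ bisectionPieces a m b, S.Nontrivial ∧ x j ∈ closure S := by
      have hxj := hx j
      rw [hs.2.2, h.comp_eq, closure_Ioo_natCast (h.left_lt.trans h.lt_right)] at hxj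
      rcases le_total (x j) m with hle | hge
      · exact ⟨_, .inl rfl, nontrivial_Ioo_natCast h.left_lt,
          (closure_Ioo_natCast h.left_lt).ge ⟨hxj.1, hle⟩⟩
      · exact ⟨_, .inr (.inr rfl), nontrivial_Ioo_natCast h.lt_right,
          (closure_Ioo_natCast h.lt_right).ge ⟨hge, hxj.2⟩⟩
    refine ⟨Function.update F j S, h.update_mem hs hS, ?_, ?_⟩
    · rw [singDirs_update_of_nontrivial (hs.2.2 ▸ h.nontrivial j) hSn, hFk]
    · exact (Function.forall_update_iff F fun i Y => x i ∈ closure Y).2 ⟨hxS, fun i _ => hx i⟩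
  · exact ⟨F, (h.mem_iff F).2 (.inl ⟨hF, hs⟩), hFk, hx⟩

theorem mem_skelOf_of_eq_midpoint (h : IsBisection M M' Q j a m b) {x : Fin d → ℝ}
    (hxj : x j = m) (hx : ∀ i, i ≠ j → x i ∈ closure (Q i)) : x ∈ skelOf M' j := by
  refine ⟨Function.update Q j {(m : ℝ)}, h.update_mem h.isSplit_self (.inr (.inl rfl)), ?_, ?_⟩
  · rw [singDirs_update_singleton, singDirs_eq_empty h.nontrivial, insert_empty_eq]
  · exact (Function.forall_update_iff Q fun i Y => x i ∈ closure Y).2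
      ⟨subset_closure hxj, hx⟩

/-- By dyadicity, an entity inside the bisected cell that crosses the bisecting hyperplane would
span the whole of `(a, b)`, and then it has been cut. -/
theorem subsingleton_or_notMem (h : IsBisection M M' Q j a m b) (hM : IsDyadicMesh G M)
    (hE : E ∈ M') (hEQ : ∀ i, E i ⊆ closure (Q i)) :
    (E j).Subsingleton ∨ (m : ℝ) ∉ E j := by
  obtain ⟨F, hF, S, -, rfl, ⟨rfl, hns⟩ | ⟨rfl | rfl | rfl, -⟩⟩ := h.exists_parent hE
  · rw [Function.update_eq_self] at hEQ ⊢
    have hQ := hM.dyadicComp Q h.mem j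
    rw [h.comp_eq] at hQ
    rcases hM.dyadicComp F hF j with ⟨r, hr⟩ | ⟨c, e, hce, hFj⟩
    · exact .inl (hr ▸ subsingleton_singleton)
    refine .inr fun hm => hns ⟨hF, hEQ, ?_⟩
    have hab := h.left_lt.trans h.lt_right
    have hsub := closure_minimal (hEQ j) isClosed_closure
    rw [hFj] at hm
    rw [hFj, h.comp_eq, closure_Ioo_natCast hab, closure_Ioo_natCast hce.lt,
      Icc_subset_Icc_iff (Nat.cast_le.2 hce.lt.le), Nat.cast_le, Nat.cast_le] at hsub
    obtain ⟨rfl, rfl⟩ := (hQ.isDyadic hab).eq_of_midpoint_mem h.midpoint hce hsub.1 hsub.2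
      (Nat.cast_lt.1 hm.1) (Nat.cast_lt.1 hm.2)
    rw [hFj, h.comp_eq]
  all_goals simp

theorem isConforming (h : IsBisection M M' Q j a m b) (hM : IsDyadicMesh G M) :
    IsConforming M' := by
  intro E hE F hF hEF
  obtain ⟨E₀, hE₀, S, hS, hES, -⟩ := h.exists_parent hE
  obtain ⟨F₀, hF₀, S', hS', hFS, hF'⟩ := h.exists_parent hF
  have hEE₀ : ∀ k, E k ⊆ E₀ k := hES ▸ (Function.forall_update_iff E₀ fun i Y => Y ⊆ E₀ i).2
    ⟨hS, fun _ _ => subset_rfl⟩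
  have hFF₀ : ∀ k, F k ⊆ F₀ k := hFS ▸ (Function.forall_update_iff F₀ fun i Y => Y ⊆ F₀ i).2
    ⟨hS', fun _ _ => subset_rfl⟩
  have hsub : ∀ k, E k ⊆ closure (F₀ k) := fun k => (hEE₀ k).trans <|
    hM.conforming E₀ hE₀ F₀ hF₀
      (fun i => (hEF i).mono (inter_subset_inter (hEE₀ i) (closure_mono (hFF₀ i)))) k
  have hEFj := hEF j
  rw [hFS] at hEFj ⊢
  rw [Function.update_self] at hEFj
  refine (Function.forall_update_iff F₀ fun i Y => E i ⊆ closure Y).2 ⟨?_, fun i _ => hsub i⟩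
  rcases hF' with ⟨rfl, -⟩ | ⟨hpiece, -, hFQ, -⟩
  · exact hsub j
  have hEQ : ∀ k, E k ⊆ closure (Q k) := fun k =>
    (hsub k).trans (closure_minimal (hFQ k) isClosed_closure)
  refine subset_closure_of_mem_bisectionPieces h.left_lt h.lt_right hpiece
    (h.isDyadicComp hM hE j).ordConnected ?_ (h.subsingleton_or_notMem hM hE hEQ) hEFj
  rw [← closure_Ioo_natCast (h.left_lt.trans h.lt_right), ← h.comp_eq]
  exact hEQ j

theorem toSet_subset_skelOf (h : IsBisection M M' Q j a m b) (hM : IsDyadicMesh G M)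
    (hE : E ∈ M') (hk : k ∈ singDirs E) : toSet E ⊆ skelOf M' k := by
  obtain ⟨F, hF, S, hSF, rfl, hS⟩ := h.exists_parent hE
  have hsub : toSet (Function.update F j S) ⊆ toSet F :=
    toSet_mono <| (Function.forall_update_iff F fun i Y => Y ⊆ F i).2
      ⟨hSF, fun _ _ => subset_rfl⟩
  by_cases hkF : k ∈ singDirs F
  · exact hsub.trans ((hM.toSet_subset_skelOf F hF k hkF).trans (h.skelOf_subset k))
  have hkj : k = j := by
    by_contra hkj
    exact hkF (by simpa [singDirs, hkj] using hk)
  subst hkj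
  have hk' : ∃ r : ℝ, S = {r} := by simpa [singDirs] using hk
  rcases hS with ⟨rfl, -⟩ | ⟨hpiece, -, hFQ, -⟩
  · exact absurd hk' hkF
  obtain rfl : S = {(m : ℝ)} := by
    obtain ⟨r, hr⟩ := hk'
    rcases hpiece with rfl | rfl | rfl
    exacts [absurd hr (nontrivial_Ioo_natCast h.left_lt).ne_singleton, rfl,
      absurd hr (nontrivial_Ioo_natCast h.lt_right).ne_singleton]
  intro x hx
  obtain ⟨hxk, hxF⟩ := mem_toSet_update.1 hx
  exact h.mem_skelOf_of_eq_midpoint hxk fun i hi => hFQ i (hxF i hi)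

theorem isDyadicMesh (h : IsBisection M M' Q j a m b) (hM : IsDyadicMesh G M) :
    IsDyadicMesh G M' where
  dyadicComp _ hE := h.isDyadicComp hM hE
  conforming := h.isConforming hM
  toSet_subset_skelOf _ hE _ := h.toSet_subset_skelOf hM hE

end IsBisection

theorem TMesh.exists_isDyadicMesh (T : TMesh d N) (hN : ∀ k, 0 < N k) :
    ∃ G, IsDyadicMesh G T.entities := by
  obtain ⟨M₀, hM₀, hsteps⟩ := T.constructed
  generalize T.entities = M at hsteps ⊢
  induction hsteps with
  | refl => exact hM₀.exists_isDyadicMesh hN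
  | tail _ hstep ih =>
    obtain ⟨G, hG⟩ := ih
    obtain ⟨Q, j, a, m, b, h⟩ := hstep.exists_isBisection
    exact ⟨G, h.isDyadicMesh hG⟩

end Bisection

/-! ### Global knot vectors of entities -/

section GlobalKnots

variable {d : ℕ} {N : Fin d → ℕ} {T : TMesh d N} {G : Fin d → Finset ℕ} {E E' : Box d}
  {j k : Fin d} {n : ℕ}

theorem TMesh.nonempty_comp (T : TMesh d N) (hE : E ∈ T.entities) (k : Fin d) : (E k).Nonempty := by
  rcases T.mem_entity E hE k with ⟨n, -, hn⟩ | hI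
  exacts [hn ▸ singleton_nonempty _, hI.nontrivial.nonempty]

theorem TMesh.closure_comp_subset_Icc (T : TMesh d N) (hE : E ∈ T.entities) (k : Fin d) :
    closure (E k) ⊆ Icc 0 (N k : ℝ) := by
  refine closure_minimal ?_ isClosed_Icc
  rcases T.mem_entity E hE k with ⟨n, hn, hS⟩ | ⟨a, b, -, hb, hS⟩ <;> rw [hS]
  · exact singleton_subset_iff.2 ⟨n.cast_nonneg, Nat.cast_le.2 hn⟩
  · exact Ioo_subset_Icc_self.trans (Icc_subset_Icc a.cast_nonneg (Nat.cast_le.2 hb))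

theorem gv_finite (T : TMesh d N) (k : Fin d) (E : Box d) : (gv T k E).Finite :=
  (finite_Iic (N k)).subset fun _ hn => hn.1

theorem proj_congr (h : ∀ k, k ≠ j → E k = E' k) (n : ℕ) : proj E j n = proj E' j n := by
  funext i
  rcases eq_or_ne i j with rfl | hij
  · simp [proj]
  · simp [proj, hij, h]

theorem gv_congr (h : ∀ k, k ≠ j → E k = E' k) : gv T j E = gv T j E' := by
  simp only [gv, proj_congr h]

/-- A point of the face `P_{k,n}(E)` lies in some entity `E'`, which is contained in `cl E` by
conformity. As `E' k` contains a boundary point of `E k`, it is not open, hence a singleton, and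
singleton components lie in the skeleton. -/
theorem IsDyadicMesh.mem_gv_of_mem_frontier (hT : IsDyadicMesh G T.entities)
    (hE : E ∈ T.entities) (hn : (n : ℝ) ∈ frontier (E k)) : n ∈ gv T k E := by
  refine ⟨Nat.cast_le.1 (T.closure_comp_subset_Icc hE k hn.1).2, fun x hx => ?_⟩
  obtain ⟨hxk, hxE⟩ := mem_toSet_update.1 hx
  rw [mem_singleton_iff] at hxk
  have hxcl : ∀ i, x i ∈ closure (E i) := fun i => by
    rcases eq_or_ne i k with rfl | hik
    exacts [hxk ▸ hn.1, subset_closure (hxE i hik)]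
  have hxdom : x ∈ domain N := fun i _ => T.closure_comp_subset_Icc hE i (hxcl i)
  rw [← T.union_eq, mem_iUnion₂] at hxdom
  obtain ⟨E', hE', hxE'⟩ := hxdom
  have hsub := hT.conforming E' hE' E hE (fun i => ⟨x i, mem_toSet.1 hxE' i, hxcl i⟩) k
  rw [skel_eq_skelOf]
  rcases hT.dyadicComp E' hE' k with hsing | ⟨a, b, -, hIoo⟩
  · exact hT.toSet_subset_skelOf E' hE' k hsing hxE'
  have hint := interior_maximal hsub (hIoo ▸ isOpen_Ioo) (mem_toSet.1 hxE' k)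
  rw [(hT.dyadicComp E hE k).interior_closure, hxk] at hint
  exact absurd hint hn.2

theorem IsDyadicMesh.notMem_interior_of_mem_gv (hT : IsDyadicMesh G T.entities)
    (hE : E ∈ T.entities) (hn : n ∈ gv T k E) : (n : ℝ) ∉ interior (E k) := by
  intro hint
  choose y hy using T.nonempty_comp hE
  have hx : ∀ i, Function.update y k (n : ℝ) i ∈ E i :=
    (Function.forall_update_iff y fun i t => t ∈ E i).2 ⟨interior_subset hint, fun i _ => hy i⟩
  have hskel := hn.2 <| mem_toSet_update.2
    ⟨Function.update_self k (n : ℝ) y, fun i _ => hx i⟩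
  rw [skel_eq_skelOf] at hskel
  obtain ⟨F, hF, hFk, hxF⟩ := hskel
  obtain ⟨r, hr⟩ : k ∈ singDirs F := hFk ▸ mem_singleton k
  have hsub := interior_mono (hT.conforming E hE F hF (fun i => ⟨_, hx i, hxF i⟩) k) hint
  rwa [hr, closure_singleton, interior_singleton] at hsub

end GlobalKnots

/-! ### Blocks of consecutive knots -/

section Blocks

variable {G V : Set ℕ} {a b h u n : ℕ}

theorem ncard_sep_lt (V : Set ℕ) [DecidablePred (· ∈ V)] (a : ℕ) :
    {v ∈ V | v < a}.ncard = Nat.count (· ∈ V) a := by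
  rw [Nat.count_eq_card_filter_range, ← ncard_coe_finset]
  congr 1
  ext v
  simp [and_comm]

theorem eq_of_ncard_sep_lt_eq (ha : a ∈ V) (hb : b ∈ V)
    (h : {v ∈ V | v < a}.ncard = {v ∈ V | v < b}.ncard) : a = b := by
  classical
  rw [ncard_sep_lt, ncard_sep_lt] at h
  exact Nat.count_injective ha hb h

theorem ncard_sep_count_mem [DecidablePred (· ∈ G)] {s : Set ℕ} (hs : s ⊆ Iio G.ncard) :
    {g ∈ G | Nat.count (· ∈ G) g ∈ s}.ncard = s.ncard := by
  have hinj : InjOn (Nat.count (· ∈ G)) {g ∈ G | Nat.count (· ∈ G) g ∈ s} :=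
    fun x hx y hy => Nat.count_injective hx.1 hy.1
  rw [← hinj.ncard_image]
  congr 1
  ext i
  refine ⟨?_, fun hi => ?_⟩
  · rintro ⟨g, hg, rfl⟩
    exact hg.2
  · have hlt : ∀ hf : (Set.ofPred (· ∈ G)).Finite, i < hf.toFinset.card := fun hf => by
      rw [← ncard_eq_toFinset_card _ hf]; exact hs hi
    exact ⟨Nat.nth (· ∈ G) i, ⟨Nat.nth_mem i hlt, by rwa [Nat.count_nth hlt]⟩, Nat.count_nth hlt⟩

theorem isBlockOf_sep_count_mem [DecidablePred (· ∈ G)] (hG : G.Finite) {s : Set ℕ}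
    (hs : s.OrdConnected) : IsBlockOf {g ∈ G | Nat.count (· ∈ G) g ∈ s} G :=
  ⟨sep_subset _ _, hG.subset (sep_subset _ _), fun _ hg _ hx _ hy hxg hgy =>
    ⟨hg, hs.out hx.2 hy.2 ⟨Nat.count_monotone _ hxg, Nat.count_monotone _ hgy⟩⟩⟩

theorem exists_isBlockOf [DecidablePred (· ∈ G)] (ha : a ∈ G) (hh : h ≤ Nat.count (· ∈ G) a)
    (hu : Nat.count (· ∈ G) a + u < G.ncard) :
    ∃ V, IsBlockOf V G ∧ V.ncard = h + u + 1 ∧ a ∈ V ∧ {v ∈ V | v < a}.ncard = h := by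
  set r := Nat.count (· ∈ G) a with hr
  have hrank : ∀ g ∈ G, g < a ↔ Nat.count (· ∈ G) g < r := fun g hg =>
    ⟨Nat.count_strict_mono hg, Nat.lt_of_count_lt_count⟩
  refine ⟨{g ∈ G | Nat.count (· ∈ G) g ∈ Icc (r - h) (r + u)},
    isBlockOf_sep_count_mem (finite_of_ncard_pos (by omega)) ordConnected_Icc, ?_,
    ⟨ha, by simp [← hr]⟩, ?_⟩
  · rw [ncard_sep_count_mem fun i hi => hi.2.trans_lt hu, ← Finset.coe_Icc, ncard_coe_finset,
      Nat.card_Icc]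
    omega
  · have hsep : {v ∈ {g ∈ G | Nat.count (· ∈ G) g ∈ Icc (r - h) (r + u)} | v < a} =
        {g ∈ G | Nat.count (· ∈ G) g ∈ Ico (r - h) r} := by
      ext g
      simp only [mem_ofPred_eq, mem_Icc, mem_Ico, and_assoc]
      refine and_congr_right fun hg => and_congr_right fun _ => ?_
      rw [hrank g hg]
      omega
    rw [hsep, ncard_sep_count_mem fun i hi => hi.2.trans (by omega : r < G.ncard),
      ← Finset.coe_Ico, ncard_coe_finset, Nat.card_Ico]
    omega

theorem exists_isBlockOf_of_frame (hG : ∀ g ∈ G, g ≤ n) (ha : a ∈ G) (hha : h ≤ a)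
    (hau : a + u ≤ n) (hlow : ∀ g < h, g ∈ G) (hupp : ∀ g, n < g + u → g ≤ n → g ∈ G) :
    ∃ V, IsBlockOf V G ∧ V.ncard = h + u + 1 ∧ a ∈ V ∧ {v ∈ V | v < a}.ncard = h := by
  classical
  refine exists_isBlockOf ha ?_ ?_
  · calc h = Nat.count (· ∈ G) h := (Nat.count_of_forall hlow).symm
      _ ≤ Nat.count (· ∈ G) a := Nat.count_monotone _ hha
  · have hcount : Nat.count (fun i => n + 1 - u + i ∈ G) u = u :=
      Nat.count_of_forall fun i hi => hupp _ (by omega) (by omega)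
    have hcard : G.ncard = Nat.count (· ∈ G) (n + 1 - u + u) := by
      rw [← ncard_sep_lt, sep_eq_self_iff_mem_true.2 fun g hg => by have := hG g hg; omega]
    calc Nat.count (· ∈ G) a + u
        < Nat.count (· ∈ G) (a + 1) + u := by
          gcongr
          exact Nat.count_strict_mono ha a.lt_succ_self
      _ ≤ Nat.count (· ∈ G) (n + 1 - u) + u := by gcongr; omega
      _ = G.ncard := by rw [hcard, Nat.count_add, hcount]

end Blocks

/-! ### Local knot vectors -/

section LocalKnots

variable {d : ℕ} {N p : Fin d → ℕ} {T : TMesh d N} {G : Fin d → Finset ℕ} {A A₁ A₂ E : Box d}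
  {k : Fin d} {V : Set ℕ} {a b n : ℕ}

theorem Admissible.mem_gv (hadm : Admissible p T) (hE : E ∈ T.entities)
    (hn : n ≤ halfdeg p k ∨ (N k - halfdeg p k ≤ n ∧ n ≤ N k)) (hnN : n ≤ N k) :
    n ∈ gv T k E := by
  refine ⟨hnN, fun x hx => hadm.2 k n hn ?_⟩
  obtain ⟨hxk, hxE⟩ := mem_toSet_update.1 hx
  rw [mem_singleton_iff] at hxk
  refine ⟨fun i _ => ?_, hxk⟩
  rcases eq_or_ne i k with rfl | hik
  · exact hxk ▸ ⟨n.cast_nonneg, Nat.cast_le.2 hnN⟩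
  · exact T.closure_comp_subset_Icc hE i (subset_closure (hxE i hik))

theorem IsAnchor.closure_comp_subset_Icc (hA : IsAnchor p T A) (k : Fin d) :
    closure (A k) ⊆ Icc (halfdeg p k : ℝ) (N k - halfdeg p k) := by
  refine closure_minimal ((univ_pi_subset_univ_pi_iff.1 hA.2.1).resolve_right ?_ k) isClosed_Icc
  rintro ⟨i, hi⟩
  exact (T.nonempty_comp hA.1 i).ne_empty hi

/-- For either parity of `p k`, a local knot vector has `p k + 1 - halfdeg p k` knots to the right
of `inf (A k)`. -/
theorem IsAnchor.exists_sInf_eq (hA : IsAnchor p T A) (k : Fin d) :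
    ∃ a : ℕ, (a : ℝ) = sInf (A k) ∧ (a : ℝ) ∈ frontier (A k) ∧ halfdeg p k ≤ a ∧
      a + (p k + 1 - halfdeg p k) ≤ N k := by
  have hsub := hA.closure_comp_subset_Icc k
  have hodd := hA.2.2 k
  unfold halfdeg at *
  rcases T.mem_entity A hA.1 k with ⟨a, -, hAk⟩ | ⟨a, b, hab, -, hAk⟩ <;>
    rw [hAk] at hsub hodd ⊢
  · have hp := hodd.1 ⟨a, rfl⟩
    obtain ⟨hle, hge⟩ := hsub (subset_closure rfl)
    rw [le_sub_iff_add_le] at hge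
    norm_cast at hle hge
    refine ⟨a, (csInf_singleton _).symm, by simp [frontier], hle, ?_⟩
    grind
  · have hp : ¬ Odd (p k) := fun h =>
      absurd (hodd.2 h) fun ⟨_, hr⟩ => (nontrivial_Ioo_natCast hab).ne_singleton hr
    have hab' : (a : ℝ) < b := Nat.cast_lt.2 hab
    rw [closure_Ioo_natCast hab, Icc_subset_Icc_iff hab'.le, le_sub_iff_add_le] at hsub
    norm_cast at hsub
    refine ⟨a, (csInf_Ioo hab').symm, by simp [frontier_Ioo hab'], hsub.1, ?_⟩
    grind

theorem IsAnchor.pos (hA : IsAnchor p T A) (k : Fin d) : 0 < N k := by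
  obtain ⟨a, -, -, -, ha⟩ := hA.exists_sInf_eq k
  unfold halfdeg at ha
  omega

theorem Admissible.exists_isAnchorKV (hadm : Admissible p T) (hA : IsAnchor p T A) (k : Fin d) :
    ∃ V, IsAnchorKV T p A k V := by
  obtain ⟨G, hG⟩ := T.exists_isDyadicMesh hA.pos
  obtain ⟨a, hinf, hfr, hha, haN⟩ := hA.exists_sInf_eq k
  obtain ⟨V, hV, hcard, haV, hrank⟩ := exists_isBlockOf_of_frame (fun n hn => hn.1)
    (hG.mem_gv_of_mem_frontier hA.1 hfr) hha haN
    (fun n hn => hadm.mem_gv hA.1 (.inl hn.le) (by omega))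
    (fun n hn hnN => hadm.mem_gv hA.1 (.inr (by unfold halfdeg at *; omega)) hnN)
  exact ⟨V, hV, by unfold halfdeg at *; omega, a, hinf, haV, hrank⟩

theorem Admissible.isAnchorKV_anchorKV (hadm : Admissible p T) (hA : IsAnchor p T A)
    (k : Fin d) : IsAnchorKV T p A k (anchorKV T p A k) := by
  have h := hadm.exists_isAnchorKV hA k
  rw [anchorKV, dif_pos h]
  exact h.choose_spec

namespace IsAnchorKV

theorem pos (hV : IsAnchorKV T p A k V) : 0 < N k := by
  have hsub : V ⊆ Finset.range (N k + 1) := fun v hv => by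
    simpa [Nat.lt_succ_iff] using (hV.1.1 hv).1
  have hcard := ncard_le_ncard hsub
  rw [ncard_coe_finset, Finset.card_range, hV.2.1] at hcard
  omega

theorem exists_gt (hV : IsAnchorKV T p A k V) (ha : (a : ℝ) = sInf (A k)) : ∃ v ∈ V, a < v := by
  obtain ⟨-, hcard, a', ha', -, hrank⟩ := hV
  obtain rfl : a = a' := Nat.cast_injective (ha.trans ha'.symm)
  by_contra! hle
  have hsub : V ⊆ insert a {v ∈ V | v < a} := fun v hv =>
    (hle v hv).eq_or_lt.imp_right fun hlt => ⟨hv, hlt⟩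
  have hfin : {v ∈ V | v < a}.Finite := (finite_Iio a).subset fun v hv => hv.2
  have hle' := (ncard_le_ncard hsub (hfin.insert a)).trans (ncard_insert_le _ _)
  unfold halfdeg at hrank
  omega

theorem isLeast_of_eq_Ioo (hV : IsAnchorKV T p A k V) (hG : IsDyadicMesh G T.entities)
    (hA : A ∈ T.entities) (hab : a < b) (hAk : A k = Ioo (a : ℝ) b) :
    IsLeast {v ∈ V | a < v} b := by
  have hab' : (a : ℝ) < b := Nat.cast_lt.2 hab
  have hinf : (a : ℝ) = sInf (A k) := by rw [hAk, csInf_Ioo hab']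
  have hlb : ∀ v ∈ V, a < v → b ≤ v := fun v hv hav => by
    have hv' := hG.notMem_interior_of_mem_gv hA (hV.1.1 hv)
    rw [hAk, interior_Ioo] at hv'
    exact le_of_not_gt fun hvb => hv' ⟨Nat.cast_lt.2 hav, Nat.cast_lt.2 hvb⟩
  have hb : b ∈ gv T k A := hG.mem_gv_of_mem_frontier hA <| by
    simp [hAk, frontier_Ioo hab']
  obtain ⟨v, hv, hav⟩ := hV.exists_gt hinf
  have haV : a ∈ V := by
    obtain ⟨-, -, a', ha', haV, -⟩ := hV
    rwa [Nat.cast_injective (hinf.trans ha'.symm)]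
  exact ⟨⟨hV.1.2.2 b hb a haV v hv hab.le (hlb v hv hav), hab⟩, fun w hw => hlb w hw.1 hw.2⟩

theorem sInf_eq (hV₁ : IsAnchorKV T p A₁ k V) (hV₂ : IsAnchorKV T p A₂ k V) :
    sInf (A₁ k) = sInf (A₂ k) := by
  obtain ⟨-, -, a₁, ha₁, hmem₁, hrank₁⟩ := hV₁
  obtain ⟨-, -, a₂, ha₂, hmem₂, hrank₂⟩ := hV₂
  rw [← ha₁, ← ha₂, eq_of_ncard_sep_lt_eq hmem₁ hmem₂ (hrank₁.trans hrank₂.symm)]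

theorem comp_eq (hV₁ : IsAnchorKV T p A₁ k V) (hV₂ : IsAnchorKV T p A₂ k V)
    (hG : IsDyadicMesh G T.entities) (hA₁ : A₁ ∈ T.entities) (hA₂ : A₂ ∈ T.entities)
    (hsing : k ∈ singDirs A₁ ↔ k ∈ singDirs A₂) : A₁ k = A₂ k := by
  have hinf := hV₁.sInf_eq hV₂
  by_cases hk : k ∈ singDirs A₁
  · obtain ⟨r₁, hr₁⟩ := hk
    obtain ⟨r₂, hr₂⟩ := hsing.1 ⟨r₁, hr₁⟩
    rw [hr₁, hr₂, csInf_singleton, csInf_singleton] at hinf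
    rw [hr₁, hr₂, hinf]
  · obtain ⟨a₁, b₁, hab₁, -, hA₁k⟩ := (T.mem_entity A₁ hA₁ k).resolve_left
      fun ⟨n, _, hn⟩ => hk ⟨n, hn⟩
    obtain ⟨a₂, b₂, hab₂, -, hA₂k⟩ := (T.mem_entity A₂ hA₂ k).resolve_left
      fun ⟨n, _, hn⟩ => hk (hsing.2 ⟨n, hn⟩)
    rw [hA₁k, hA₂k, csInf_Ioo (Nat.cast_lt.2 hab₁), csInf_Ioo (Nat.cast_lt.2 hab₂),
      Nat.cast_inj] at hinf
    subst hinf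
    rw [hA₁k, hA₂k, (hV₁.isLeast_of_eq_Ioo hG hA₁ hab₁ hA₁k).unique
      (hV₂.isLeast_of_eq_Ioo hG hA₂ hab₂ hA₂k)]

end IsAnchorKV

theorem equal_knot_vectors_except_one_direction_general (hA₁ : A₁ ∈ T.entities)
    (hA₂ : A₂ ∈ T.entities) (hsing : singDirs A₁ = singDirs A₂) (hne : A₁ ≠ A₂) (j : Fin d)
    {V₁ V₂ : Fin d → Set ℕ} (hV₁ : ∀ k, IsAnchorKV T p A₁ k (V₁ k))
    (hV₂ : ∀ k, IsAnchorKV T p A₂ k (V₂ k)) (heq : ∀ k, k ≠ j → V₁ k = V₂ k) :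
    (∀ k, k ≠ j → A₁ k = A₂ k) ∧ gv T j A₁ = gv T j A₂ ∧ V₁ j ≠ V₂ j ∧
      Overlaps (V₁ j) (V₂ j) := by
  obtain ⟨G, hG⟩ := T.exists_isDyadicMesh fun k => (hV₁ k).pos
  have hcomp (k : Fin d) (hV : V₁ k = V₂ k) : A₁ k = A₂ k :=
    (hV₁ k).comp_eq (hV ▸ hV₂ k) hG hA₁ hA₂ (by rw [hsing])
  have hoff (k : Fin d) (hk : k ≠ j) : A₁ k = A₂ k := hcomp k (heq k hk)
  have hgv : gv T j A₁ = gv T j A₂ := gv_congr hoff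
  refine ⟨hoff, hgv, fun hj => hne (funext fun k => ?_),
    gv T j A₁, gv_finite T j A₁, (hV₁ j).1, hgv ▸ (hV₂ j).1⟩
  rcases eq_or_ne k j with rfl | hk
  exacts [hcomp k hj, hoff k hk]

end LocalKnots

end TSpline

/-- If two distinct anchors have identical local knot vectors in all
directions `k ≠ j`, then they coincide in all components except the `j`-th, their
global knot vectors in direction `j` coincide, and their local knot vectors in
direction `j` differ and overlap. -/
theorem TSpline.equal_knot_vectors_except_one_direction
    {d : ℕ} {N p : Fin d → ℕ} (T : TSpline.TMesh d N)
    (hadm : TSpline.Admissible p T)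
    (A₁ A₂ : TSpline.Box d) (h₁ : TSpline.IsAnchor p T A₁)
    (h₂ : TSpline.IsAnchor p T A₂) (hne : A₁ ≠ A₂) (j : Fin d)
    (heq : ∀ k : Fin d, k ≠ j → TSpline.anchorKV T p A₁ k = TSpline.anchorKV T p A₂ k) :
    (∀ k : Fin d, k ≠ j → A₁ k = A₂ k) ∧
    TSpline.gv T j A₁ = TSpline.gv T j A₂ ∧
    TSpline.anchorKV T p A₁ j ≠ TSpline.anchorKV T p A₂ j ∧
    TSpline.Overlaps (TSpline.anchorKV T p A₁ j) (TSpline.anchorKV T p A₂ j) :=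
  TSpline.equal_knot_vectors_except_one_direction_general h₁.1 h₂.1
    (Set.ext fun k => (h₁.2.2 k).trans (h₂.2.2 k).symm) hne j
    (hadm.isAnchorKV_anchorKV h₁) (hadm.isAnchorKV_anchorKV h₂) heq
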